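/- Let B ⊆ A be a non-degenerate C*-inclusion, view A inside its multiplier algebra M(A), and set M_B = {m ∈ M(A) : m b ∈ B and b m ∈ B for all b ∈ B} (the canonical copy of M(B) inside M(A)). Then: (i) N_{M(A)}(B) is a norm-closed subset of M(A) containing the unit and closed under products and adjoints, and if n ∈ N_{M(A)}(B) is invertible in M(A), then n⁻¹ ∈ N_{M(A)}(B); (ii) N_A(B) = N_{M(A)}(B) ∩ A = {b₁ n b₂ : b₁, b₂ ∈ B, n ∈ N_{M(A)}(B)} = {b₁ n b₂ : b₁, b₂ ∈ B, n ∈ N_A(B)}; (iii) {n ∈ M(A) : n m n* ∈ M_B and n* m n ∈ M_B for all m ∈ M_B} = N_{M(A)}(B); in particular, n n* ∈ M_B and n* n ∈ M_B for every n ∈ N_{M(A)}(B). -/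

import Mathlib

open scoped MultiplierAlgebra

/-- The set of normalizers of `S`: `{n | n S n* ⊆ S and n* S n ⊆ S}`. -/
def normalizerIn {R : Type*} [Mul R] [Star R] (S : Set R) : Set R :=
  {n | ∀ s ∈ S, n * s * star n ∈ S ∧ star n * s * n ∈ S}

/-- The canonical embedding of `A` into its multiplier algebra `M(A) = 𝓜(ℂ, A)`. -/
noncomputable def kA (A : Type*) [NonUnitalCStarAlgebra A] : A →⋆ₙₐ[ℂ] 𝓜(ℂ, A) :=
  DoubleCentralizer.coeHom

/-- `N_{M(A)}(B)`: normalizers of `B` (viewed inside `M(A)`) in the multiplier algebra. -/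
def NM {A : Type*} [NonUnitalCStarAlgebra A] (Bs : Set A) : Set 𝓜(ℂ, A) :=
  normalizerIn (kA A '' Bs)

/-- `M_B = {m ∈ M(A) : m B ⊆ B and B m ⊆ B}`, the canonical copy of `M(B)` inside `M(A)`. -/
def MB {A : Type*} [NonUnitalCStarAlgebra A] (Bs : Set A) : Set 𝓜(ℂ, A) :=
  {m | ∀ b ∈ Bs, m * kA A b ∈ kA A '' Bs ∧ kA A b * m ∈ kA A '' Bs}

/-- Non-degeneracy of the inclusion `Bs ⊆ A`. -/
def NondegSet {A : Type*} [NonUnitalCStarAlgebra A] (Bs : Set A) : Prop :=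
  closure (Submodule.span ℂ {x : A | ∃ b ∈ Bs, ∃ a : A, x = b * a} : Set A) = Set.univ

/-!
Approximating along `B` shows `n m n* b = lim (n (m e) n*) b ∈ B` for a normalizer `n`, a multiplier
`m` of `B` and `b ∈ B`, so conjugation by `n` preserves `M(B)`, and `n n* ∈ M(B)`. If `n` is
invertible, spectral permanence puts `(n n*)⁻¹` in `M(B)`, and `n⁻¹ = n* (n n*)⁻¹`. For `n ∈ A`,
even `h := n n*` lies in `B`, and `n = h ^ (1/4) w` with `w` a norm limit of elements of `B n`,
hence again a normalizer; factoring `w*` in the same way yields `n = b₁ n' b₂`.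
-/

open Filter Topology

section Normalizer

variable {R : Type*}

lemma star_mem_normalizerIn [Mul R] [InvolutiveStar R] {S : Set R} {n : R}
    (hn : n ∈ normalizerIn S) : star n ∈ normalizerIn S := by
  intro s hs
  rw [star_star]
  exact (hn s hs).symm

lemma mul_mem_normalizerIn [Semigroup R] [StarMul R] {S : Set R} {m n : R}
    (hm : m ∈ normalizerIn S) (hn : n ∈ normalizerIn S) : m * n ∈ normalizerIn S := by
  intro s hs
  have hleft := (hm _ (hn s hs).1).1
  have hright := (hn _ (hm s hs).2).2
  simp only [star_mul, mul_assoc] at hleft hright ⊢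
  exact ⟨hleft, hright⟩

lemma isClosed_normalizerIn [TopologicalSpace R] [Mul R] [Star R] [ContinuousMul R]
    [ContinuousStar R] {S : Set R} (hS : IsClosed S) : IsClosed (normalizerIn S) := by
  simp only [normalizerIn, Set.ofPred_forall]
  exact isClosed_biInter fun s _ =>
    (hS.preimage (f := fun n => n * s * star n) (by fun_prop)).inter
      (hS.preimage (f := fun n => star n * s * n) (by fun_prop))

variable {T F : Type*} [Mul R] [Star R] [Mul T] [Star T] [FunLike F R T] [MulHomClass F R T]
  [StarHomClass F R T]

lemma map_mem_normalizerIn_image {f : F} (hf : Function.Injective f) {S : Set R} {n : R} :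
    f n ∈ normalizerIn (f '' S) ↔ n ∈ normalizerIn S := by
  simp only [normalizerIn, Set.mem_ofPred_eq, Set.forall_mem_image, ← map_star, ← map_mul,
    hf.mem_set_image]

lemma image_normalizerIn {f : F} (hf : Function.Injective f) (S : Set R) :
    f '' normalizerIn S = normalizerIn (f '' S) ∩ Set.range f := by
  ext x
  constructor
  · rintro ⟨n, hn, rfl⟩
    exact ⟨(map_mem_normalizerIn_image hf).2 hn, n, rfl⟩
  · rintro ⟨hx, n, rfl⟩
    exact ⟨n, (map_mem_normalizerIn_image hf).1 hx, rfl⟩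

end Normalizer

section StarSubalgebra

variable {𝕜 R : Type*} [CommSemiring 𝕜]

lemma mem_normalizerIn_of_mem [NonUnitalSemiring R] [StarRing R] [Module 𝕜 R]
    {B : NonUnitalStarSubalgebra 𝕜 R} {b : R} (hb : b ∈ B) : b ∈ normalizerIn (B : Set R) :=
  fun _ hs => ⟨mul_mem (mul_mem hb hs) (star_mem hb), mul_mem (mul_mem (star_mem hb) hs) hb⟩

variable [StarRing 𝕜] [Semiring R] [StarRing R] [Algebra 𝕜 R] [StarModule 𝕜 R]

/-- The two-sided idealizer `{m | m B ⊆ B and B m ⊆ B}` of a star subalgebra `B` of `R`: the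
multipliers of `B` that are realised in `R`. -/
def idealizer (B : NonUnitalStarSubalgebra 𝕜 R) : StarSubalgebra 𝕜 R where
  carrier := {m | ∀ b ∈ B, m * b ∈ B ∧ b * m ∈ B}
  mul_mem' {m n} hm hn b hb :=
    ⟨by rw [mul_assoc]; exact (hm _ (hn b hb).1).1, by rw [← mul_assoc]; exact (hn _ (hm b hb).2).2⟩
  add_mem' {m n} hm hn b hb :=
    ⟨by rw [add_mul]; exact add_mem (hm b hb).1 (hn b hb).1,
      by rw [mul_add]; exact add_mem (hm b hb).2 (hn b hb).2⟩
  algebraMap_mem' r b hb := by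
    rw [← Algebra.commutes, ← Algebra.smul_def]
    exact ⟨SMulMemClass.smul_mem r hb, SMulMemClass.smul_mem r hb⟩
  star_mem' {m} hm b hb :=
    ⟨by simpa using star_mem (hm _ (star_mem hb)).2, by simpa using star_mem (hm _ (star_mem hb)).1⟩

variable {B : NonUnitalStarSubalgebra 𝕜 R} {m : R}

lemma mem_idealizer_of_mem (hm : m ∈ B) : m ∈ idealizer B :=
  fun _ hb => ⟨mul_mem hm hb, mul_mem hb hm⟩

lemma mem_normalizerIn_of_mem_idealizer (hm : m ∈ idealizer B) : m ∈ normalizerIn (B : Set R) :=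
  fun b hb => ⟨(star_mem hm _ (hm b hb).1).2, (hm _ (star_mem hm b hb).1).2⟩

lemma isClosed_idealizer [TopologicalSpace R] [ContinuousMul R] (hB : IsClosed (B : Set R)) :
    IsClosed (idealizer B : Set R) := by
  change IsClosed {m : R | ∀ b ∈ B, m * b ∈ B ∧ b * m ∈ B}
  simp only [Set.ofPred_forall]
  exact isClosed_biInter fun b _ =>
    (hB.preimage (continuous_mul_const b)).inter (hB.preimage (continuous_const_mul b))

end StarSubalgebra

section Nondegenerate

/-- The elements `a` of `R` in the closure of `S a`. If `S` is a C⋆-subalgebra, these are the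
elements on which an approximate unit of `S` acts from the left as an approximate unit. -/
def leftNondegeneratePart {R : Type*} [TopologicalSpace R] [Mul R] (S : Set R) : Set R :=
  {a | a ∈ closure ((· * a) '' S)}

lemma mul_mem_leftNondegeneratePart {R : Type*} [TopologicalSpace R] [Semigroup R]
    [ContinuousMul R] {S : Set R} {a : R} (ha : a ∈ leftNondegeneratePart S) (r : R) :
    a * r ∈ leftNondegeneratePart S := by
  refine Set.MapsTo.closure ?_ (continuous_mul_const r) ha
  rintro _ ⟨s, hs, rfl⟩
  exact ⟨s, hs, (mul_assoc s a r).symm⟩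

lemma map_mem_leftNondegeneratePart {R T F : Type*} [TopologicalSpace R] [Mul R]
    [TopologicalSpace T] [Mul T] [FunLike F R T] [MulHomClass F R T] {f : F} (hf : Continuous f)
    {S : Set R} {a : R} (ha : a ∈ leftNondegeneratePart S) :
    f a ∈ leftNondegeneratePart (f '' S) := by
  refine Set.MapsTo.closure ?_ hf ha
  rintro _ ⟨s, hs, rfl⟩
  exact ⟨f s, ⟨s, hs, rfl⟩, (map_mul f s a).symm⟩

lemma mul_mem_of_mem_leftNondegeneratePart {R : Type*} [TopologicalSpace R] [Mul R]
    [ContinuousMul R] {S : Set R} (hS : IsClosed S) {a r : R} (ha : a ∈ leftNondegeneratePart S)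
    (h : ∀ s ∈ S, r * (s * a) ∈ S) : r * a ∈ S :=
  hS.closure_subset <| Set.MapsTo.closure (Set.forall_mem_image.2 h) (continuous_const_mul r) ha

variable {A : Type*} [NonUnitalCStarAlgebra A] {B : NonUnitalStarSubalgebra ℂ A}

lemma mem_leftNondegeneratePart_of_nondegSet (hB : IsClosed (B : Set A))
    (hnd : NondegSet (B : Set A)) (a : A) : a ∈ leftNondegeneratePart (B : Set A) := by
  let _ : PartialOrder B := CStarAlgebra.spectralOrder B
  have : StarOrderedRing B := CStarAlgebra.spectralOrderedRing B
  have hunit := CStarAlgebra.increasingApproximateUnit B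
  let l : Filter (Metric.closedBall (0 : B) 1) := comap (↑) (CStarAlgebra.approximateUnit B)
  have : (CStarAlgebra.approximateUnit B).NeBot := hunit.neBot
  have : l.NeBot := comap_coe_neBot_of_le_principal (le_principal_iff.2 hunit.closedBall_mem)
  have hequi : Equicontinuous fun (e : Metric.closedBall (0 : B) 1) (x : A) => (e : A) * x := by
    refine (LipschitzWith.uniformEquicontinuous _ 1 fun e => ?_).equicontinuous
    refine LipschitzWith.of_dist_le_mul fun x y => ?_
    rw [dist_eq_norm, dist_eq_norm, ← mul_sub]
    exact norm_mul_le_of_le (mem_closedBall_zero_iff.1 e.2) le_rfl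
  have hspan : (Submodule.span ℂ {x : A | ∃ b ∈ (B : Set A), ∃ a : A, x = b * a} : Set A) ⊆
      {x | Tendsto (fun e : Metric.closedBall (0 : B) 1 => (e : A) * x) l (𝓝 x)} := by
    intro x hx
    induction hx using Submodule.span_induction with
    | mem x h =>
      obtain ⟨b, hb, y, rfl⟩ := h
      have hleft : Tendsto (fun e : Metric.closedBall (0 : B) 1 => (e : A) * b) l (𝓝 b) :=
        (continuous_subtype_val.tendsto _).comp
          ((hunit.tendsto_mul_right ⟨b, hb⟩).comp tendsto_comap)
      simpa [mul_assoc] using hleft.mul_const y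
    | zero => simp
    | add x y _ _ hx hy => simpa [mul_add] using hx.add hy
    | smul c x _ hx => simpa [mul_smul_comm] using hx.const_smul c
  have hlim : Tendsto (fun e : Metric.closedBall (0 : B) 1 => (e : A) * a) l (𝓝 a) :=
    closure_minimal hspan (hequi.isClosed_setOfPred_tendsto continuous_id) (hnd ▸ Set.mem_univ a)
  exact mem_closure_of_tendsto hlim (.of_forall fun e => ⟨e, e.1.2, rfl⟩)

end Nondegenerate

section Idealizer

variable {𝕜 R : Type*} [CommSemiring 𝕜] [StarRing 𝕜] [Semiring R] [StarRing R] [Algebra 𝕜 R]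
  [StarModule 𝕜 R] [TopologicalSpace R] [ContinuousMul R] {B : NonUnitalStarSubalgebra 𝕜 R}
  (hB : IsClosed (B : Set R))
  (hnd : ∀ r : R, ∀ b ∈ B, r * b ∈ leftNondegeneratePart (B : Set R))

include hB hnd

lemma mul_mul_star_mul_mem {n m b : R} (hn : n ∈ normalizerIn (B : Set R)) (hm : m ∈ idealizer B)
    (hb : b ∈ B) : n * m * star n * b ∈ B := by
  rw [mul_assoc]
  refine mul_mem_of_mem_leftNondegeneratePart hB (hnd (star n) b hb) fun e he => ?_
  have hconj : n * (m * e) * star n * b ∈ B := mul_mem (hn _ (hm e he).1).1 hb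
  simpa only [mul_assoc, SetLike.mem_coe] using hconj

lemma mul_mul_star_mem_idealizer {n m : R} (hn : n ∈ normalizerIn (B : Set R))
    (hm : m ∈ idealizer B) : n * m * star n ∈ idealizer B := by
  refine fun b hb => ⟨mul_mul_star_mul_mem hB hnd hn hm hb, ?_⟩
  have hstar := star_mem (mul_mul_star_mul_mem hB hnd hn (star_mem hm) (star_mem hb))
  simpa only [star_mul, star_star, mul_assoc] using hstar

lemma mul_star_mem_idealizer {n : R} (hn : n ∈ normalizerIn (B : Set R)) :
    n * star n ∈ idealizer B := by
  simpa only [mul_one] using mul_mul_star_mem_idealizer hB hnd hn (one_mem _)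

lemma normalizerIn_idealizer : normalizerIn (idealizer B : Set R) = normalizerIn (B : Set R) := by
  have mem_of_mem_idealizer {r b s : R} (hb : b ∈ B) (h : r * b * s ∈ idealizer B) :
      r * b * s ∈ B := by
    rw [← one_mul (r * b * s)]
    refine mul_mem_of_mem_leftNondegeneratePart hB
      (mul_mem_leftNondegeneratePart (hnd r b hb) s) fun e he => ?_
    rw [one_mul]
    exact (h e he).2
  ext n
  constructor
  · intro hn b hb
    have hconj := hn b (mem_idealizer_of_mem hb)
    exact ⟨mem_of_mem_idealizer hb hconj.1, mem_of_mem_idealizer hb hconj.2⟩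
  · intro hn m hm
    refine ⟨mul_mul_star_mem_idealizer hB hnd hn hm, ?_⟩
    simpa only [star_star, SetLike.mem_coe] using
      mul_mul_star_mem_idealizer hB hnd (star_mem_normalizerIn hn) hm

end Idealizer

section Inverse

variable {R : Type*} [CStarAlgebra R]

lemma inv_mem_of_isClosed {S : StarSubalgebra ℂ R} (hS : IsClosed (S : Set R)) {u : Rˣ}
    (hu : (u : R) ∈ S) : ((u⁻¹ : Rˣ) : R) ∈ S := by
  obtain ⟨v, hv⟩ : IsUnit (⟨u, hu⟩ : S) := (StarSubalgebra.coe_isUnit S).1 u.isUnit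
  have huv : Units.map S.subtype v = u := Units.ext (congrArg Subtype.val hv)
  rw [← huv, ← map_inv]
  exact (v⁻¹ : Sˣ).1.2

lemma inv_mem_normalizerIn {B : NonUnitalStarSubalgebra ℂ R} (hB : IsClosed (B : Set R))
    (hnd : ∀ r : R, ∀ b ∈ B, r * b ∈ leftNondegeneratePart (B : Set R)) {u : Rˣ}
    (hu : (u : R) ∈ normalizerIn (B : Set R)) :
    ((u⁻¹ : Rˣ) : R) ∈ normalizerIn (B : Set R) := by
  have hmul : ((u * star u : Rˣ) : R) ∈ idealizer B := mul_star_mem_idealizer hB hnd hu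
  have hinv := inv_mem_of_isClosed (isClosed_idealizer hB) hmul
  have heq : u⁻¹ = star u * (u * star u)⁻¹ := by group
  rw [heq, Units.val_mul]
  exact mul_mem_normalizerIn (star_mem_normalizerIn hu) (mem_normalizerIn_of_mem_idealizer hinv)

end Inverse

section Factorization

/-- The regularisation `t ^ (1/4) / (t ^ (1/2) + δ ^ 2)` of `t ^ (-1/4)`, which, unlike the latter,
is continuous and vanishes at `0`, so that the non-unital functional calculus applies. -/
noncomputable def regInvFourthRoot (δ t : ℝ) : ℝ := √√t / (√t + δ ^ 2)

lemma regInvFourthRoot_zero (δ : ℝ) : regInvFourthRoot δ 0 = 0 := by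
  simp [regInvFourthRoot]

lemma continuous_regInvFourthRoot {δ : ℝ} (hδ : 0 < δ) : Continuous (regInvFourthRoot δ) :=
  Continuous.div (by fun_prop) (by fun_prop) fun t => by positivity

lemma abs_regInvFourthRoot_mul_sqrt_sub_le {δ : ℝ} (hδ : 0 < δ) (t : ℝ) :
    |regInvFourthRoot δ t * √t - √√t| ≤ δ / 2 := by
  have hden : 0 < √t + δ ^ 2 := by positivity
  have herr : regInvFourthRoot δ t * √t - √√t = -(δ ^ 2 * √√t / (√t + δ ^ 2)) := by
    unfold regInvFourthRoot
    field_simp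
    ring
  rw [herr, abs_neg, abs_of_nonneg (by positivity), div_le_iff₀ hden]
  have hsq : √√t ^ 2 = √t := Real.sq_sqrt (Real.sqrt_nonneg t)
  nlinarith [mul_nonneg hδ.le (sq_nonneg (√√t - δ))]

lemma abs_regInvFourthRoot_sub_mul_sqrt_le {δ ε : ℝ} (hδ : 0 < δ) (hε : 0 < ε) (t : ℝ) :
    |regInvFourthRoot δ t - regInvFourthRoot ε t| * √t ≤ δ / 2 + ε / 2 := by
  calc |regInvFourthRoot δ t - regInvFourthRoot ε t| * √t
      = |regInvFourthRoot δ t * √t - regInvFourthRoot ε t * √t| := by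
        rw [← sub_mul, abs_mul, abs_of_nonneg (Real.sqrt_nonneg t)]
    _ ≤ |regInvFourthRoot δ t * √t - √√t| + |√√t - regInvFourthRoot ε t * √t| := abs_sub_le _ _ _
    _ ≤ δ / 2 + ε / 2 := by
        rw [abs_sub_comm (√√t)]
        exact add_le_add (abs_regInvFourthRoot_mul_sqrt_sub_le hδ t)
          (abs_regInvFourthRoot_mul_sqrt_sub_le hε t)

lemma abs_fourthRoot_mul_regInvFourthRoot_sub_one_mul_sqrt_le {δ : ℝ} (hδ : 0 < δ) (t : ℝ) :
    |√√t * regInvFourthRoot δ t - 1| * √t ≤ δ ^ 2 := by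
  have hden : 0 < √t + δ ^ 2 := by positivity
  have hsq : √√t * √√t = √t := Real.mul_self_sqrt (Real.sqrt_nonneg t)
  have herr : √√t * regInvFourthRoot δ t - 1 = -(δ ^ 2 / (√t + δ ^ 2)) := by
    rw [regInvFourthRoot, ← mul_div_assoc, hsq]
    field_simp
    ring
  rw [herr, abs_neg, abs_of_nonneg (by positivity), div_mul_eq_mul_div, div_le_iff₀ hden]
  gcongr
  linarith [sq_nonneg δ]

variable {A : Type*} [NonUnitalCStarAlgebra A]

lemma nonneg_of_mem_quasispectrum_mul_star_self {x : A} {t : ℝ}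
    (ht : t ∈ quasispectrum ℝ (x * star x)) : 0 ≤ t := by
  let _ : PartialOrder A := CStarAlgebra.spectralOrder A
  have : StarOrderedRing A := CStarAlgebra.spectralOrderedRing A
  exact quasispectrum_nonneg_of_nonneg _ (mul_star_self_nonneg x) t ht

lemma cfcₙ_mul_sub_smul_mul_star_self (x : A) {g : ℝ → ℝ} (c : ℝ)
    (hg : ContinuousOn g (quasispectrum ℝ (x * star x))) (hg0 : g 0 = 0) :
    (cfcₙ g (x * star x) * x - c • x) * star (cfcₙ g (x * star x) * x - c • x) =
      cfcₙ (fun t => (g t - c) ^ 2 * t) (x * star x) := by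
  have hgsa : star (cfcₙ g (x * star x)) = cfcₙ g (x * star x) :=
    (cfcₙ_predicate g (x * star x) : IsSelfAdjoint _).star_eq
  have hexpand : (cfcₙ g (x * star x) * x - c • x) * star (cfcₙ g (x * star x) * x - c • x) =
      (cfcₙ g (x * star x) * (x * star x) - c • (x * star x)) * cfcₙ g (x * star x) -
        c • (cfcₙ g (x * star x) * (x * star x) - c • (x * star x)) := by
    simp only [star_sub, star_mul, star_smul, star_trivial, hgsa, mul_sub, sub_mul, mul_assoc,
      smul_mul_assoc, mul_smul_comm, smul_sub]
  have hsa : IsSelfAdjoint (x * star x) := .mul_star_self x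
  rw [hexpand]
  generalize x * star x = h at hg hsa ⊢
  have hmul : ContinuousOn (fun t => g t * t) (quasispectrum ℝ h) := hg.mul continuousOn_id
  have hlin : ContinuousOn (fun t => g t * t - c * t) (quasispectrum ℝ h) :=
    hmul.sub (continuousOn_id.const_mul c)
  have hlin0 : g 0 * 0 - c * 0 = 0 := by simp
  have hcfc : cfcₙ (fun t => g t * t - c * t) h = cfcₙ g h * h - c • h := by
    rw [cfcₙ_sub (fun t => g t * t) (fun t => c * t) h hmul, cfcₙ_mul g (fun t => t) h hg hg0,
      cfcₙ_const_mul c (fun t => t) h, cfcₙ_id' ℝ h]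
  calc (cfcₙ g h * h - c • h) * cfcₙ g h - c • (cfcₙ g h * h - c • h)
      = cfcₙ (fun t => (g t * t - c * t) * g t - c * (g t * t - c * t)) h := by
        rw [cfcₙ_sub (fun t => (g t * t - c * t) * g t) (fun t => c * (g t * t - c * t)) h
            (hlin.mul hg) (by simp) (hlin.const_mul c) (by simp),
          cfcₙ_mul (fun t => g t * t - c * t) g h hlin hlin0 hg hg0,
          cfcₙ_const_mul c (fun t => g t * t - c * t) h hlin hlin0, hcfc]
    _ = cfcₙ (fun t => (g t - c) ^ 2 * t) h := by
        congr 1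
        ext t
        ring

lemma norm_cfcₙ_mul_sub_smul_le (x : A) {g : ℝ → ℝ} {c C : ℝ}
    (hg : ContinuousOn g (quasispectrum ℝ (x * star x))) (hg0 : g 0 = 0)
    (hC : ∀ t ∈ quasispectrum ℝ (x * star x), |g t - c| * √t ≤ C) :
    ‖cfcₙ g (x * star x) * x - c • x‖ ≤ C := by
  have hC0 : 0 ≤ C := by simpa using hC 0 (quasispectrum.zero_mem ℝ _)
  refine le_of_sq_le_sq ?_ hC0
  rw [sq, ← CStarRing.norm_self_mul_star, cfcₙ_mul_sub_smul_mul_star_self x c hg hg0]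
  refine norm_cfcₙ_le fun t ht => ?_
  have ht0 : 0 ≤ t := nonneg_of_mem_quasispectrum_mul_star_self ht
  calc ‖(g t - c) ^ 2 * t‖ = (|g t - c| * √t) ^ 2 := by
        rw [Real.norm_of_nonneg (by positivity), mul_pow, sq_abs, Real.sq_sqrt ht0]
    _ ≤ C ^ 2 := by gcongr; exact hC t ht

lemma cauchySeq_cfcₙ_regInvFourthRoot_mul (x : A) {δ : ℕ → ℝ} (hδ : ∀ k, 0 < δ k)
    (hanti : Antitone δ) (hlim : Tendsto δ atTop (𝓝 0)) :
    CauchySeq fun k => cfcₙ (regInvFourthRoot (δ k)) (x * star x) * x := by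
  refine cauchySeq_of_le_tendsto_0 δ (fun j k N hj hk => ?_) hlim
  have hcont := fun k => (continuous_regInvFourthRoot (hδ k)).continuousOn
    (s := quasispectrum ℝ (x * star x))
  have hzero := fun k => regInvFourthRoot_zero (δ k)
  rw [dist_eq_norm, ← sub_mul, ← cfcₙ_sub _ _ (hf := hcont j) (hf0 := hzero j) (hg := hcont k)
    (hg0 := hzero k), ← sub_zero (_ * x), ← zero_smul ℝ x]
  refine norm_cfcₙ_mul_sub_smul_le x ((hcont j).sub (hcont k)) (by simp [hzero]) fun t _ => ?_
  rw [sub_zero]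
  linarith [abs_regInvFourthRoot_sub_mul_sqrt_le (hδ j) (hδ k) t, hanti hj, hanti hk]

lemma tendsto_cfcₙ_fourthRoot_mul_cfcₙ_regInvFourthRoot_mul (x : A) {δ : ℕ → ℝ}
    (hδ : ∀ k, 0 < δ k) (hlim : Tendsto δ atTop (𝓝 0)) :
    Tendsto (fun k => cfcₙ (fun t : ℝ => √√t) (x * star x) *
      (cfcₙ (regInvFourthRoot (δ k)) (x * star x) * x)) atTop (𝓝 x) := by
  have hsq : Tendsto (fun k => δ k ^ 2) atTop (𝓝 0) := by simpa using hlim.pow 2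
  refine tendsto_iff_norm_sub_tendsto_zero.2
    (squeeze_zero (fun _ => norm_nonneg _) (fun k => ?_) hsq)
  have hcont := (continuous_regInvFourthRoot (hδ k)).continuousOn
    (s := quasispectrum ℝ (x * star x))
  rw [← mul_assoc, ← cfcₙ_mul (fun t : ℝ => √√t) (regInvFourthRoot (δ k)) (hg := hcont)
    (hg0 := regInvFourthRoot_zero _)]
  have hle := norm_cfcₙ_mul_sub_smul_le (c := 1) x
    (g := fun t => √√t * regInvFourthRoot (δ k) t) (ContinuousOn.mul (by fun_prop) hcont) (by simp)
    fun t _ => abs_fourthRoot_mul_regInvFourthRoot_sub_one_mul_sqrt_le (hδ k) t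
  rwa [one_smul] at hle

lemma exists_cfcₙ_fourthRoot_mul_eq (x : A) :
    ∃ w ∈ closure ((· * x) '' (NonUnitalStarAlgebra.elemental ℂ (x * star x) : Set A)),
      cfcₙ (fun t : ℝ => √√t) (x * star x) * w = x := by
  let δ : ℕ → ℝ := fun k => 1 / ((k : ℝ) + 1)
  have hδ : ∀ k, 0 < δ k := fun k => Nat.one_div_pos_of_nat
  have hanti : Antitone δ := fun _ _ h => Nat.one_div_le_one_div h
  have hlim : Tendsto δ atTop (𝓝 0) := tendsto_one_div_add_atTop_nhds_zero_nat
  obtain ⟨w, hw⟩ :=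
    cauchySeq_tendsto_of_complete (cauchySeq_cfcₙ_regInvFourthRoot_mul x hδ hanti hlim)
  refine ⟨w, mem_closure_of_tendsto hw (.of_forall fun k => ⟨_, ?_, rfl⟩), ?_⟩
  · have := NonUnitalStarAlgebra.elemental.isClosed ℂ (x * star x)
    exact cfcₙ_mem _ (NonUnitalStarAlgebra.elemental.self_mem ℂ (x * star x))
  · exact tendsto_nhds_unique (hw.const_mul _)
      (tendsto_cfcₙ_fourthRoot_mul_cfcₙ_regInvFourthRoot_mul x hδ hlim)

variable {B : NonUnitalStarSubalgebra ℂ A} (hB : IsClosed (B : Set A))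

include hB

lemma exists_eq_mul_of_mem_normalizerIn {n : A} (hn : n ∈ normalizerIn (B : Set A))
    (hnd : star n ∈ leftNondegeneratePart (B : Set A)) :
    ∃ b ∈ B, ∃ m ∈ normalizerIn (B : Set A), n = b * m := by
  have hmul : n * star n ∈ B := mul_mem_of_mem_leftNondegeneratePart hB hnd fun e he => by
    rw [← mul_assoc]
    exact (hn e he).1
  obtain ⟨w, hw, hfac⟩ := exists_cfcₙ_fourthRoot_mul_eq n
  refine ⟨_, cfcₙ_mem (hs := hB) _ hmul, w, ?_, hfac.symm⟩
  refine closure_minimal (Set.image_subset_iff.2 fun b hb => ?_) (isClosed_normalizerIn hB) hw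
  have hbB : b ∈ B := NonUnitalStarAlgebra.elemental.le_of_mem hB hmul hb
  exact mul_mem_normalizerIn (mem_normalizerIn_of_mem hbB) hn

lemma normalizerIn_eq_mul_mul (hnd : ∀ a, a ∈ leftNondegeneratePart (B : Set A)) :
    normalizerIn (B : Set A) =
      {x | ∃ b₁ ∈ (B : Set A), ∃ n ∈ normalizerIn (B : Set A), ∃ b₂ ∈ (B : Set A),
        x = b₁ * n * b₂} := by
  ext x
  constructor
  · intro hx
    obtain ⟨b₁, hb₁, m, hm, rfl⟩ := exists_eq_mul_of_mem_normalizerIn hB hx (hnd _)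
    obtain ⟨b₂, hb₂, n, hn, hfac⟩ :=
      exists_eq_mul_of_mem_normalizerIn hB (star_mem_normalizerIn hm) (hnd _)
    refine ⟨b₁, hb₁, star n, star_mem_normalizerIn hn, star b₂, star_mem hb₂, ?_⟩
    rw [mul_assoc, ← star_mul, ← hfac, star_star]
  · rintro ⟨b₁, hb₁, n, hn, b₂, hb₂, rfl⟩
    exact mul_mem_normalizerIn (mul_mem_normalizerIn (mem_normalizerIn_of_mem hb₁) hn)
      (mem_normalizerIn_of_mem hb₂)

end Factorization

section Embedding

variable {A : Type*} [NonUnitalCStarAlgebra A]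

lemma mul_kA (m : 𝓜(ℂ, A)) (a : A) : m * kA A a = kA A (m.fst a) := by
  have hright (y z : A) : z * m.fst (a * y) = z * (m.fst a * y) := by
    rw [← m.central, ← mul_assoc, m.central, mul_assoc]
  refine DoubleCentralizer.ext _ _ _ _ (Prod.ext ?_ ?_)
  · refine ContinuousLinearMap.ext fun y => ?_
    change m.fst (a * y) = m.fst a * y
    refine sub_eq_zero.1 (CStarRing.star_mul_self_eq_zero_iff _ |>.1 ?_)
    rw [mul_sub, hright, sub_self]
  · exact ContinuousLinearMap.ext fun y => m.central y a

lemma mul_kA_mem_range (m : 𝓜(ℂ, A)) (a : A) : m * kA A a ∈ Set.range (kA A) :=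
  ⟨m.fst a, (mul_kA m a).symm⟩

lemma kA_injective : Function.Injective (kA A) := by
  refine (AddMonoidHomClass.isometry_of_norm (kA A) fun a => ?_).injective
  rw [← DoubleCentralizer.norm_fst]
  exact ContinuousLinearMap.opNorm_mul_apply ℂ A a

lemma MB_eq_idealizer (B : NonUnitalStarSubalgebra ℂ A) :
    MB (B : Set A) = (idealizer (B.map (kA A)) : Set 𝓜(ℂ, A)) :=
  Set.ext fun m => (Set.forall_mem_image (f := kA A) (s := (B : Set A))
    (p := fun k => m * k ∈ kA A '' B ∧ k * m ∈ kA A '' B)).symm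

end Embedding

lemma image_normalizerIn_eq_mul_mul {A M : Type*} [NonUnitalCStarAlgebra A] [Semigroup M]
    [StarMul M] {F : Type*} [FunLike F A M] [MulHomClass F A M] [StarHomClass F A M] {ι : F}
    (hι : Function.Injective ι) (hideal : ∀ m a, m * ι a ∈ Set.range ι)
    {B : NonUnitalStarSubalgebra ℂ A} (hB : IsClosed (B : Set A))
    (hnd : ∀ a, a ∈ leftNondegeneratePart (B : Set A)) :
    ι '' normalizerIn (B : Set A) =
      {x | ∃ b₁ ∈ (B : Set A), ∃ n ∈ normalizerIn (ι '' B), ∃ b₂ ∈ (B : Set A),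
        x = ι b₁ * n * ι b₂} := by
  have map_mem {n : A} (hn : n ∈ normalizerIn (B : Set A)) : ι n ∈ normalizerIn (ι '' B) :=
    (map_mem_normalizerIn_image hι).2 hn
  ext x
  constructor
  · rintro ⟨n, hn, rfl⟩
    rw [normalizerIn_eq_mul_mul hB hnd] at hn
    obtain ⟨b₁, hb₁, m, hm, b₂, hb₂, rfl⟩ := hn
    exact ⟨b₁, hb₁, ι m, map_mem hm, b₂, hb₂, by rw [map_mul, map_mul]⟩
  · rintro ⟨b₁, hb₁, n, hn, b₂, hb₂, rfl⟩
    rw [image_normalizerIn hι]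
    exact ⟨mul_mem_normalizerIn
      (mul_mem_normalizerIn (map_mem (mem_normalizerIn_of_mem hb₁)) hn)
      (map_mem (mem_normalizerIn_of_mem hb₂)), hideal _ _⟩

theorem stmt14_general {A M : Type*} [NonUnitalCStarAlgebra A] [CStarAlgebra M]
    (ι : A →⋆ₙₐ[ℂ] M) (hι : Function.Injective ι) (hideal : ∀ m a, m * ι a ∈ Set.range ι)
    (B : NonUnitalStarSubalgebra ℂ A) (hB : IsClosed (B : Set A)) (hnd : NondegSet (B : Set A)) :
    (IsClosed (normalizerIn (ι '' B)) ∧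
      1 ∈ normalizerIn (ι '' B) ∧
      (∀ m ∈ normalizerIn (ι '' B), ∀ n ∈ normalizerIn (ι '' B), m * n ∈ normalizerIn (ι '' B)) ∧
      (∀ n ∈ normalizerIn (ι '' B), star n ∈ normalizerIn (ι '' B)) ∧
      (∀ u : Mˣ, (u : M) ∈ normalizerIn (ι '' B) → ((u⁻¹ : Mˣ) : M) ∈ normalizerIn (ι '' B))) ∧
    (ι '' normalizerIn (B : Set A) = normalizerIn (ι '' B) ∩ Set.range ι ∧
      ι '' normalizerIn (B : Set A) =
        {x | ∃ b₁ ∈ (B : Set A), ∃ n ∈ normalizerIn (ι '' B), ∃ b₂ ∈ (B : Set A),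
          x = ι b₁ * n * ι b₂} ∧
      normalizerIn (B : Set A) =
        {x | ∃ b₁ ∈ (B : Set A), ∃ n ∈ normalizerIn (B : Set A), ∃ b₂ ∈ (B : Set A),
          x = b₁ * n * b₂}) ∧
    (normalizerIn (idealizer (B.map ι) : Set M) = normalizerIn (ι '' B) ∧
      ∀ n ∈ normalizerIn (ι '' B),
        n * star n ∈ idealizer (B.map ι) ∧ star n * n ∈ idealizer (B.map ι)) := by
  have hiso : Isometry ι := NonUnitalStarAlgHom.isometry ι hι
  have hBM : IsClosed (B.map ι : Set M) := hiso.isClosedEmbedding.isClosedMap _ hB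
  have hndA := mem_leftNondegeneratePart_of_nondegSet hB hnd
  have hndM (m : M) : ∀ b ∈ B.map ι, m * b ∈ leftNondegeneratePart (B.map ι : Set M) := by
    rintro _ ⟨b, -, rfl⟩
    obtain ⟨a, ha⟩ := hideal m b
    exact ha ▸ map_mem_leftNondegeneratePart hiso.continuous (hndA a)
  refine ⟨⟨isClosed_normalizerIn hBM,
      mem_normalizerIn_of_mem_idealizer (one_mem (idealizer (B.map ι))),
      fun _ hm _ hn => mul_mem_normalizerIn hm hn, fun _ => star_mem_normalizerIn,
      fun _ => inv_mem_normalizerIn hBM hndM⟩,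
    ⟨image_normalizerIn hι _, image_normalizerIn_eq_mul_mul hι hideal hB hndA,
      normalizerIn_eq_mul_mul hB hndA⟩,
    normalizerIn_idealizer hBM hndM, fun n hn => ⟨mul_star_mem_idealizer hBM hndM hn, ?_⟩⟩
  simpa only [star_star] using mul_star_mem_idealizer hBM hndM (star_mem_normalizerIn hn)

/-- Properties of normalizers in the multiplier algebra of a
non-degenerate C*-inclusion `B ⊆ A`. -/
theorem stmt14 {A : Type*} [NonUnitalCStarAlgebra A]
    (B : NonUnitalStarSubalgebra ℂ A) (hBclosed : IsClosed (B : Set A))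
    (hnd : NondegSet (B : Set A)) :
    -- (i) `N_{M(A)}(B)` is a norm-closed unital *-subsemigroup, stable under inversion :
    (IsClosed (NM (B : Set A)) ∧
      (1 : 𝓜(ℂ, A)) ∈ NM (B : Set A) ∧
      (∀ m ∈ NM (B : Set A), ∀ n ∈ NM (B : Set A), m * n ∈ NM (B : Set A)) ∧
      (∀ n ∈ NM (B : Set A), star n ∈ NM (B : Set A)) ∧
      (∀ u : (𝓜(ℂ, A))ˣ, (u : 𝓜(ℂ, A)) ∈ NM (B : Set A) →
        ((u⁻¹ : (𝓜(ℂ, A))ˣ) : 𝓜(ℂ, A)) ∈ NM (B : Set A))) ∧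
    -- (ii) `N_A(B) = N_{M(A)}(B) ∩ A = B ⬝ N_{M(A)}(B) ⬝ B = B ⬝ N_A(B) ⬝ B` :
    (kA A '' normalizerIn (B : Set A) = NM (B : Set A) ∩ Set.range (kA A) ∧
      kA A '' normalizerIn (B : Set A) =
        {x : 𝓜(ℂ, A) | ∃ b₁ ∈ (B : Set A), ∃ n ∈ NM (B : Set A), ∃ b₂ ∈ (B : Set A),
          x = kA A b₁ * n * kA A b₂} ∧
      normalizerIn (B : Set A) =
        {x : A | ∃ b₁ ∈ (B : Set A), ∃ n ∈ normalizerIn (B : Set A), ∃ b₂ ∈ (B : Set A),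
          x = b₁ * n * b₂}) ∧
    -- (iii) `N_{M(A)}(M(B)) = N_{M(A)}(B)`; in particular `n n*, n* n ∈ M(B)` :
    (normalizerIn (MB (B : Set A)) = NM (B : Set A) ∧
      ∀ n ∈ NM (B : Set A), n * star n ∈ MB (B : Set A) ∧ star n * n ∈ MB (B : Set A)) := by
  rw [MB_eq_idealizer]
  exact stmt14_general (kA A) kA_injective mul_kA_mem_range B hBclosed hnd
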